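/- For all real numbers z > 0 and c ≥ 0, one has ∫₀^∞ (z/t) · (2πt)^{-1/2} · exp(−(z − c·t)²/(2t)) dt = 1, where the integral is the Lebesgue integral over (0,∞). -/

import Mathlib

open MeasureTheory Real

/-!
Write `Φ` for the standard normal distribution function. By the reflection principle and a change of
drift, the first passage time `S(z)` should have the distribution function
`F(t) = Φ(c√t - z/√t) + exp(2cz) Φ(-c√t - z/√t)`.
Since `exp(2cz) φ(-c√t - z/√t) = φ(c√t - z/√t)` for the normal density `φ`, the contributions
`±c/(2√t)` of the inner derivatives cancel in `F'`, which is thus the first passage density. Its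
integral is `F(∞) - F(0+)`, and the limits of `F` are read off from those of `Φ`.
-/

section

open Filter ProbabilityTheory Set
open scoped NNReal Topology

lemma integral_Ioi_of_hasDerivAt_of_nonneg_of_tendsto {g g' : ℝ → ℝ} {a l m : ℝ}
    (hderiv : ∀ x ∈ Ioi a, HasDerivAt g (g' x) x) (hg' : ∀ x ∈ Ioi a, 0 ≤ g' x)
    (ha : Tendsto g (𝓝[>] a) (𝓝 l)) (htop : Tendsto g atTop (𝓝 m)) :
    ∫ x in Ioi a, g' x = m - l := by
  have heq : EqOn (Function.update g a l) g (Ioi a) :=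
    fun x hx ↦ Function.update_of_ne (ne_of_gt hx) _ _
  have hcont : ContinuousWithinAt (Function.update g a l) (Ici a) a := by
    rwa [continuousWithinAt_update_same, Ici_sdiff_left]
  have hderiv' : ∀ x ∈ Ioi a, HasDerivAt (Function.update g a l) (g' x) x := fun x hx ↦
    (hderiv x hx).congr_of_eventuallyEq (heq.eventuallyEq_of_mem (Ioi_mem_nhds hx))
  have htop' : Tendsto (Function.update g a l) atTop (𝓝 m) :=
    htop.congr' (heq.eventuallyEq_of_mem (Ioi_mem_atTop a)).symm
  rw [integral_Ioi_of_hasDerivAt_of_nonneg hcont hderiv' hg' htop', Function.update_self]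

lemma cdf_add_cdf_neg (μ : Measure ℝ) [IsProbabilityMeasure μ] [NullSingletonClass μ]
    [μ.IsNegInvariant] (x : ℝ) : cdf μ x + cdf μ (-x) = 1 := by
  have hneg : μ.real (Iic (-x)) = μ.real (Iic x)ᶜ := by
    rw [compl_Iic, measureReal_congr Ioi_ae_eq_Ici, measureReal_def, measureReal_def,
      ← Measure.measure_neg, neg_Iic, neg_neg]
  rw [cdf_eq_real, cdf_eq_real, hneg, probReal_add_probReal_compl measurableSet_Iic]

lemma cdf_eq_integral_of_eq_withDensity {μ : Measure ℝ} [IsProbabilityMeasure μ] {f : ℝ → ℝ}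
    (hμ : μ = volume.withDensity fun x ↦ ENNReal.ofReal (f x)) (hf : Integrable f)
    (hf_nonneg : 0 ≤ᵐ[volume] f) (x : ℝ) : cdf μ x = ∫ u in Iic x, f u := by
  rw [cdf_eq_real, measureReal_def, hμ, withDensity_apply _ measurableSet_Iic,
    integral_eq_lintegral_of_nonneg_ae (ae_restrict_of_ae hf_nonneg)
      hf.aestronglyMeasurable.restrict]

lemma hasDerivAt_cdf_of_eq_withDensity {μ : Measure ℝ} [IsProbabilityMeasure μ] {f : ℝ → ℝ}
    (hμ : μ = volume.withDensity fun x ↦ ENNReal.ofReal (f x)) (hf : Integrable f)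
    (hf_nonneg : 0 ≤ᵐ[volume] f) {x : ℝ} (hx : ContinuousAt f x) :
    HasDerivAt (cdf μ) (f x) x := by
  have hcdf : cdf μ = fun y ↦ cdf μ x + ∫ u in x..y, f u := by
    ext y
    simp only [cdf_eq_integral_of_eq_withDensity hμ hf hf_nonneg]
    rw [← intervalIntegral.integral_Iic_sub_Iic hf.integrableOn hf.integrableOn, add_sub_cancel]
  rw [hcdf]
  exact (intervalIntegral.integral_hasDerivAt_right hf.intervalIntegrable
    hf.aestronglyMeasurable.stronglyMeasurableAtFilter hx).const_add _

lemma hasDerivAt_cdf_gaussianReal (m : ℝ) {v : ℝ≥0} (hv : v ≠ 0) (x : ℝ) :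
    HasDerivAt (cdf (gaussianReal m v)) (gaussianPDFReal m v x) x := by
  have hcont : Continuous (gaussianPDFReal m v) := by
    rw [gaussianPDFReal_def]
    fun_prop
  exact hasDerivAt_cdf_of_eq_withDensity (gaussianReal_of_var_ne_zero m hv)
    (integrable_gaussianPDFReal m v) (.of_forall (gaussianPDFReal_nonneg m v)) hcont.continuousAt

lemma cdf_gaussianReal_zero_zero {v : ℝ≥0} (hv : v ≠ 0) : cdf (gaussianReal 0 v) 0 = 1 / 2 := by
  have : NullSingletonClass (gaussianReal 0 v) := nullSingletonClass_gaussianReal hv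
  have : (gaussianReal 0 v).IsNegInvariant :=
    ⟨gaussianReal_map_neg.trans (by rw [neg_zero])⟩
  have h := cdf_add_cdf_neg (gaussianReal 0 v) 0
  rw [neg_zero] at h
  linarith

lemma exp_mul_gaussianPDFReal_neg_sub (x y : ℝ) :
    exp (2 * x * y) * gaussianPDFReal 0 1 (-x - y) = gaussianPDFReal 0 1 (x - y) := by
  simp only [gaussianPDFReal, NNReal.coe_one]
  rw [mul_left_comm, ← exp_add]
  ring_nf

lemma hasDerivAt_mul_sqrt_sub_div_sqrt (c z : ℝ) {t : ℝ} (ht : 0 < t) :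
    HasDerivAt (fun s ↦ c * √s - z / √s) ((c * t + z) / (2 * (t * √t))) t := by
  have hsqrt := hasDerivAt_sqrt ht.ne'
  have hsqrt_pos : 0 < √t := sqrt_pos.2 ht
  refine ((hsqrt.const_mul c).sub ((hsqrt.inv hsqrt_pos.ne').const_mul z)).congr_deriv ?_
  rw [sq_sqrt ht.le]
  field_simp
  ring

/-- The upper tail `P(B(t) + c t ≥ z) = Φ(c√t - z/√t)` of Brownian motion with drift `c` at a time
`t > 0`, where `Φ` is the standard normal distribution function. -/
noncomputable def driftedBrownianTail (c z t : ℝ) : ℝ :=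
  cdf (gaussianReal 0 1) (c * √t - z / √t)

lemma hasDerivAt_driftedBrownianTail (c z : ℝ) {t : ℝ} (ht : 0 < t) :
    HasDerivAt (driftedBrownianTail c z)
      (gaussianPDFReal 0 1 (c * √t - z / √t) * ((c * t + z) / (2 * (t * √t)))) t :=
  (hasDerivAt_cdf_gaussianReal 0 one_ne_zero _).comp t (hasDerivAt_mul_sqrt_sub_div_sqrt c z ht)

lemma tendsto_driftedBrownianTail_nhdsGT_zero (c : ℝ) {z : ℝ} (hz : 0 < z) :
    Tendsto (driftedBrownianTail c z) (𝓝[>] 0) (𝓝 0) := by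
  have hsqrt : Tendsto sqrt (𝓝[>] 0) (𝓝 0) := by
    simpa using (continuous_sqrt.tendsto 0).mono_left (nhdsWithin_le_nhds (s := Ioi 0))
  have hsqrt_pos : ∀ᶠ t in 𝓝[>] (0 : ℝ), √t ∈ Ioi 0 :=
    eventually_mem_nhdsWithin.mono fun _ ↦ sqrt_pos.2
  have hinv : Tendsto (fun t ↦ (√t)⁻¹) (𝓝[>] 0) atTop :=
    tendsto_inv_nhdsGT_zero.comp (tendsto_nhdsWithin_iff.2 ⟨hsqrt, hsqrt_pos⟩)
  have hneg : Tendsto (fun t ↦ -(z / √t)) (𝓝[>] 0) atBot :=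
    tendsto_neg_atTop_atBot.comp (hinv.const_mul_atTop hz)
  exact (tendsto_cdf_atBot _).comp ((hsqrt.const_mul c).add_atBot hneg)

lemma tendsto_neg_div_sqrt_atTop (z : ℝ) : Tendsto (fun t ↦ -(z / √t)) atTop (𝓝 0) := by
  simpa using (tendsto_sqrt_atTop.const_div_atTop z).neg

lemma tendsto_driftedBrownianTail_atTop_of_pos {c : ℝ} (hc : 0 < c) (z : ℝ) :
    Tendsto (driftedBrownianTail c z) atTop (𝓝 1) :=
  (tendsto_cdf_atTop _).comp
    ((tendsto_sqrt_atTop.const_mul_atTop hc).atTop_add (tendsto_neg_div_sqrt_atTop z))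

lemma tendsto_driftedBrownianTail_atTop_of_neg {c : ℝ} (hc : c < 0) (z : ℝ) :
    Tendsto (driftedBrownianTail c z) atTop (𝓝 0) :=
  (tendsto_cdf_atBot _).comp
    ((tendsto_sqrt_atTop.const_mul_atTop_of_neg hc).atBot_add (tendsto_neg_div_sqrt_atTop z))

lemma tendsto_driftedBrownianTail_zero_atTop (z : ℝ) :
    Tendsto (driftedBrownianTail 0 z) atTop (𝓝 (1 / 2)) := by
  have hcont := (hasDerivAt_cdf_gaussianReal 0 one_ne_zero 0).continuousAt.tendsto
  rw [cdf_gaussianReal_zero_zero one_ne_zero] at hcont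
  exact (hcont.comp (tendsto_neg_div_sqrt_atTop z)).congr fun t ↦ by simp [driftedBrownianTail]

/-- The density at `t > 0` of the first passage time over the level `z > 0` of Brownian motion
with drift `c`, in the form given by Kendall's identity. -/
noncomputable def firstPassagePDF (c z t : ℝ) : ℝ :=
  z / t * ((2 * π * t) ^ (-(1 : ℝ) / 2) * exp (-(z - c * t) ^ 2 / (2 * t)))

/-- The distribution function at `t > 0` of the first passage time over the level `z > 0` of
Brownian motion with drift `c`. For `c < 0` it is defective: its limit at infinity
is `exp (2 * c * z)`. -/
noncomputable def firstPassageCDF (c z t : ℝ) : ℝ :=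
  driftedBrownianTail c z t + exp (2 * c * z) * driftedBrownianTail (-c) z t

lemma firstPassagePDF_nonneg (c : ℝ) {z t : ℝ} (hz : 0 ≤ z) (ht : 0 ≤ t) :
    0 ≤ firstPassagePDF c z t := by
  unfold firstPassagePDF
  positivity

lemma firstPassagePDF_eq_gaussianPDFReal (c z : ℝ) {t : ℝ} (ht : 0 < t) :
    firstPassagePDF c z t = gaussianPDFReal 0 1 (c * √t - z / √t) * (z / (t * √t)) := by
  have hrpow : (2 * π * t) ^ (-(1 : ℝ) / 2) = (√(2 * π))⁻¹ * (√t)⁻¹ := by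
    rw [neg_div, rpow_neg (by positivity), ← sqrt_eq_rpow, sqrt_mul (by positivity), mul_inv]
  have hsq : (c * √t - z / √t) ^ 2 = (z - c * t) ^ 2 / t := by
    field_simp
    rw [sq_sqrt ht.le]
    ring
  have hexponent : -(c * √t - z / √t) ^ 2 / 2 = -(z - c * t) ^ 2 / (2 * t) := by
    rw [hsq]
    field_simp
  simp only [firstPassagePDF, gaussianPDFReal, NNReal.coe_one, sub_zero, mul_one]
  rw [hrpow, hexponent]
  field_simp

lemma hasDerivAt_firstPassageCDF (c z : ℝ) {t : ℝ} (ht : 0 < t) :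
    HasDerivAt (firstPassageCDF c z) (firstPassagePDF c z t) t := by
  have hcross : 2 * c * z = 2 * (c * √t) * (z / √t) := by
    field_simp
  have hdrift : exp (2 * c * z) * gaussianPDFReal 0 1 (-c * √t - z / √t) =
      gaussianPDFReal 0 1 (c * √t - z / √t) := by
    rw [hcross, neg_mul, exp_mul_gaussianPDFReal_neg_sub]
  refine ((hasDerivAt_driftedBrownianTail c z ht).add
    ((hasDerivAt_driftedBrownianTail (-c) z ht).const_mul (exp (2 * c * z)))).congr_deriv ?_
  rw [← mul_assoc (exp _), hdrift, firstPassagePDF_eq_gaussianPDFReal c z ht]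
  field_simp
  ring

lemma tendsto_firstPassageCDF_nhdsGT_zero (c : ℝ) {z : ℝ} (hz : 0 < z) :
    Tendsto (firstPassageCDF c z) (𝓝[>] 0) (𝓝 0) := by
  simpa using! (tendsto_driftedBrownianTail_nhdsGT_zero c hz).add
    ((tendsto_driftedBrownianTail_nhdsGT_zero (-c) hz).const_mul (exp (2 * c * z)))

lemma tendsto_firstPassageCDF_atTop (c : ℝ) {z : ℝ} (hz : 0 ≤ z) :
    Tendsto (firstPassageCDF c z) atTop (𝓝 (min 1 (exp (2 * c * z)))) := by
  obtain ⟨p, q, hp, hq, hpq⟩ : ∃ p q, Tendsto (driftedBrownianTail c z) atTop (𝓝 p) ∧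
      Tendsto (driftedBrownianTail (-c) z) atTop (𝓝 q) ∧
      p + exp (2 * c * z) * q = min 1 (exp (2 * c * z)) := by
    rcases lt_trichotomy c 0 with hc | rfl | hc
    · refine ⟨0, 1, tendsto_driftedBrownianTail_atTop_of_neg hc z,
        tendsto_driftedBrownianTail_atTop_of_pos (neg_pos.2 hc) z, ?_⟩
      have hcz : 2 * c * z ≤ 0 := mul_nonpos_of_nonpos_of_nonneg (by linarith) hz
      rw [min_eq_right (exp_le_one_iff.2 hcz), zero_add, mul_one]
    · refine ⟨1 / 2, 1 / 2, tendsto_driftedBrownianTail_zero_atTop z, ?_, by norm_num⟩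
      simpa using tendsto_driftedBrownianTail_zero_atTop z
    · refine ⟨1, 0, tendsto_driftedBrownianTail_atTop_of_pos hc z,
        tendsto_driftedBrownianTail_atTop_of_neg (neg_neg_iff_pos.2 hc) z, ?_⟩
      rw [min_eq_left (one_le_exp (by positivity)), mul_zero, add_zero]
  exact hpq ▸ hp.add (hq.const_mul _)

theorem kendall_first_passage_density_integral_general (c : ℝ) {z : ℝ} (hz : 0 < z) :
    ∫ t in Ioi 0, firstPassagePDF c z t = min 1 (exp (2 * c * z)) := by
  rw [integral_Ioi_of_hasDerivAt_of_nonneg_of_tendsto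
    (fun t ht ↦ hasDerivAt_firstPassageCDF c z ht)
    (fun t ht ↦ firstPassagePDF_nonneg c hz.le (le_of_lt ht))
    (tendsto_firstPassageCDF_nhdsGT_zero c hz) (tendsto_firstPassageCDF_atTop c hz.le), sub_zero]

end

/-- Kendall's identity for Brownian motion with nonnegative drift `c`: the first passage density
`(z/t)·(2πt)^(-1/2)·exp(−(z − c·t)²/(2t))` integrates to `1` over `(0,∞)`. -/
theorem kendall_first_passage_density_integral (z c : ℝ) (hz : 0 < z) (hc : 0 ≤ c) :
    (∫ t in Set.Ioi (0 : ℝ),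
        z / t * ((2 * Real.pi * t) ^ (-(1 : ℝ) / 2) *
          Real.exp (-(z - c * t) ^ 2 / (2 * t)))) = 1 :=
  (kendall_first_passage_density_integral_general c hz).trans
    (min_eq_left (one_le_exp (by positivity)))
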